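/- arXiv:1907.00440 — 2 statements merged into one kernel-verified Lean document; each statement's English description precedes it below -/
import Mathlib

section
/- Equilibrium orthogonality (smooth setting, equation (2.4) of the paper): Let d ≥ 1, let f : ℝ^d → ℝ, let u : ℝ^d → ℝ be a C² compactly supported function with Δu(x) = −f(x) for all x ∈ ℝ^d, and let σ* : ℝ^d → ℝ^d be a C¹ compactly supported vector field satisfying the equilibrium condition div σ*(x) = −f(x) for all x ∈ ℝ^d. Then ∫_{ℝ^d} ⟨∇u(x), ∇u(x) − σ*(x)⟩ dx = 0; i.e. ∇u is orthogonal in L² to ∇u − σ*, so ∇u lies on the hypersphere having σ* as a diameter. -/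
open MeasureTheory RealInnerProductSpace

/-- Divergence of a vector field on `ℝ^d`: `div σ (x) = ∑ i (∂σᵢ/∂xᵢ)(x)`. -/
noncomputable def vdiv {d : ℕ} (σ : EuclideanSpace ℝ (Fin d) → EuclideanSpace ℝ (Fin d))
    (x : EuclideanSpace ℝ (Fin d)) : ℝ :=
  ∑ i : Fin d, fderiv ℝ σ x (EuclideanSpace.single i (1 : ℝ)) i

/-!
For compactly supported `u`, integrating the product rule `div (u τ) = u div τ + ⟪∇u, τ⟫` gives
`∫ ⟪∇u, τ⟫ = -∫ u div τ`, because the divergence of a compactly supported field has integral zero.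
Take `τ = ∇u - σ*`, which is divergence free.
-/

section Gradient

variable {H : Type*} [NormedAddCommGroup H] [InnerProductSpace ℝ H] [CompleteSpace H]

lemma contDiff_gradient {u : H → ℝ} {m n : WithTop ℕ∞} (hu : ContDiff ℝ n u) (hmn : m + 1 ≤ n) :
    ContDiff ℝ m (gradient u) :=
  (InnerProductSpace.toDual ℝ H).symm.contDiff.comp (hu.fderiv_right hmn)

end Gradient

lemma integral_fderiv_apply_eq_zero {E G : Type*} [NormedAddCommGroup E] [NormedSpace ℝ E]
    [FiniteDimensional ℝ E] [MeasurableSpace E] [BorelSpace E]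
    [NormedAddCommGroup G] [NormedSpace ℝ G]
    {μ : Measure E} [μ.IsAddHaarMeasure] {F : E → G} {v : E} (hF : Differentiable ℝ F)
    (hFint : Integrable F μ) (hF'int : Integrable (fun x ↦ fderiv ℝ F x v) μ) :
    ∫ x, fderiv ℝ F x v ∂μ = 0 := by
  simpa using integral_smul_fderiv_eq_neg_fderiv_smul_of_integrable (f := fun _ : E ↦ (1 : ℝ))
    (by simp) (by simpa using hF'int) (by simpa using hFint)
    (fun _ _ ↦ differentiableAt_const _) (fun x _ ↦ hF x)

section VectorField

variable {d : ℕ}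

local notation "𝔼" => EuclideanSpace ℝ (Fin d)

lemma gradient_apply (u : 𝔼 → ℝ) (x : 𝔼) (i : Fin d) :
    gradient u x i = fderiv ℝ u x (EuclideanSpace.single i 1) := by
  rw [← inner_gradient_left, EuclideanSpace.inner_single_right]
  simp

lemma continuous_vdiv {τ : 𝔼 → 𝔼} (hτ : ContDiff ℝ 1 τ) : Continuous (vdiv τ) :=
  continuous_finsetSum _ fun i _ ↦ (EuclideanSpace.proj (𝕜 := ℝ) i).continuous.comp
    ((hτ.continuous_fderiv one_ne_zero).clm_apply continuous_const)

lemma hasCompactSupport_vdiv {τ : 𝔼 → 𝔼} (hτ : HasCompactSupport τ) :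
    HasCompactSupport (vdiv τ) :=
  (hτ.fderiv ℝ).comp_left
    (g := fun A : 𝔼 →L[ℝ] 𝔼 ↦ ∑ i, A (EuclideanSpace.single i 1) i) (by simp)

lemma vdiv_sub {σ τ : 𝔼 → 𝔼} {x : 𝔼} (hσ : DifferentiableAt ℝ σ x)
    (hτ : DifferentiableAt ℝ τ x) : vdiv (σ - τ) x = vdiv σ x - vdiv τ x := by
  simp [vdiv, fderiv_sub hσ hτ]

lemma vdiv_smul {u : 𝔼 → ℝ} {τ : 𝔼 → 𝔼} {x : 𝔼} (hu : DifferentiableAt ℝ u x)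
    (hτ : DifferentiableAt ℝ τ x) :
    vdiv (u • τ) x = u x * vdiv τ x + ⟪gradient u x, τ x⟫ := by
  have hinner : ⟪gradient u x, τ x⟫ = ∑ i, fderiv ℝ u x (EuclideanSpace.single i 1) * τ x i := by
    simp only [PiLp.inner_apply, Real.inner_apply, gradient_apply]
  simp [vdiv, hinner, fderiv_smul hu hτ, Finset.sum_add_distrib, Finset.mul_sum,
    -inner_gradient_left]

lemma integral_vdiv_eq_zero {F : 𝔼 → 𝔼} (hF : Differentiable ℝ F) (hFint : Integrable F)
    (hF'int : Integrable (fderiv ℝ F)) : ∫ x, vdiv F x = 0 := by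
  have hpartial (i : Fin d) :
      Integrable fun x ↦ fderiv ℝ F x (EuclideanSpace.single i 1) :=
    hF'int.apply_continuousLinearMap _
  calc ∫ x, vdiv F x
      = ∑ i, ∫ x, fderiv ℝ F x (EuclideanSpace.single i 1) i :=
        integral_finsetSum _ fun i _ ↦
          (EuclideanSpace.proj (𝕜 := ℝ) i).integrable_comp (hpartial i)
    _ = ∑ i, (∫ x, fderiv ℝ F x (EuclideanSpace.single i 1)) i :=
        Finset.sum_congr rfl fun i _ ↦
          (EuclideanSpace.proj (𝕜 := ℝ) i).integral_comp_comm (hpartial i)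
    _ = 0 := by
        simp only [integral_fderiv_apply_eq_zero hF hFint (hpartial _), PiLp.zero_apply,
          Finset.sum_const_zero]

lemma integral_vdiv_eq_zero_of_hasCompactSupport {F : 𝔼 → 𝔼} (hF : ContDiff ℝ 1 F)
    (hFsupp : HasCompactSupport F) : ∫ x, vdiv F x = 0 :=
  integral_vdiv_eq_zero (hF.differentiable one_ne_zero)
    (hF.continuous.integrable_of_hasCompactSupport hFsupp)
    ((hF.continuous_fderiv one_ne_zero).integrable_of_hasCompactSupport (hFsupp.fderiv ℝ))

lemma integral_inner_gradient_eq_neg_integral_mul_vdiv {u : 𝔼 → ℝ} {τ : 𝔼 → 𝔼}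
    (hu : ContDiff ℝ 1 u) (husupp : HasCompactSupport u) (hτ : ContDiff ℝ 1 τ) :
    ∫ x, ⟪gradient u x, τ x⟫ = -∫ x, u x * vdiv τ x := by
  have hprod (x : 𝔼) : ⟪gradient u x, τ x⟫ = vdiv (u • τ) x - u x * vdiv τ x := by
    rw [vdiv_smul (hu.differentiable one_ne_zero x) (hτ.differentiable one_ne_zero x),
      add_sub_cancel_left]
  have huτ : ContDiff ℝ 1 (u • τ) := hu.smul hτ
  have huτsupp : HasCompactSupport (u • τ) := husupp.smul_right
  have hvdiv_int : Integrable (vdiv (u • τ)) :=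
    (continuous_vdiv huτ).integrable_of_hasCompactSupport (hasCompactSupport_vdiv huτsupp)
  have hmul_int : Integrable fun x ↦ u x * vdiv τ x :=
    (hu.continuous.mul (continuous_vdiv hτ)).integrable_of_hasCompactSupport husupp.mul_right
  simp only [hprod]
  rw [integral_sub hvdiv_int hmul_int, integral_vdiv_eq_zero_of_hasCompactSupport huτ huτsupp,
    zero_sub]

theorem equilibrium_orthogonality_general {u : 𝔼 → ℝ} {σ : 𝔼 → 𝔼}
    (hu : ContDiff ℝ 2 u) (husupp : HasCompactSupport u) (hσ : ContDiff ℝ 1 σ)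
    (hdiv : ∀ x, vdiv (gradient u) x = vdiv σ x) :
    ∫ x, ⟪gradient u x, gradient u x - σ x⟫ = 0 := by
  have hgrad : ContDiff ℝ 1 (gradient u) := contDiff_gradient hu one_add_one_eq_two.le
  have hτdiv (x : 𝔼) : vdiv (gradient u - σ) x = 0 := by
    rw [vdiv_sub (hgrad.differentiable one_ne_zero x) (hσ.differentiable one_ne_zero x), hdiv,
      sub_self]
  calc ∫ x, ⟪gradient u x, gradient u x - σ x⟫
      = -∫ x, u x * vdiv (gradient u - σ) x :=
        integral_inner_gradient_eq_neg_integral_mul_vdiv (hu.of_le one_le_two) husupp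
          (hgrad.sub hσ)
    _ = 0 := by simp only [hτdiv, mul_zero, integral_zero, neg_zero]

end VectorField

/-- Equilibrium orthogonality: if `Δu = -f` and `div σ* = -f`, then
`∫ ⟪∇u, ∇u - σ*⟫ = 0`. -/
theorem equilibrium_orthogonality {d : ℕ} (hd : 1 ≤ d)
    (f u : EuclideanSpace ℝ (Fin d) → ℝ)
    (hu : ContDiff ℝ 2 u) (husupp : HasCompactSupport u)
    (hlap : ∀ x, vdiv (gradient u) x = - f x)
    (σstar : EuclideanSpace ℝ (Fin d) → EuclideanSpace ℝ (Fin d))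
    (hσ : ContDiff ℝ 1 σstar) (hσsupp : HasCompactSupport σstar)
    (hdiv : ∀ x, vdiv σstar x = - f x) :
    ∫ x, ⟪gradient u x, gradient u x - σstar x⟫ = 0 :=
  equilibrium_orthogonality_general hu husupp hσ fun x ↦ (hlap x).trans (hdiv x).symm
end

section
/- Hypercircle diameter property: Let E be a real inner product space, let σ, σ*, σ'' ∈ E with σ'' ≠ 0, suppose ⟪σ, σ − σ*⟫ = 0 and ⟪σ − σ*, σ''⟫ = 0, and define σ̂'' := (⟪σ, σ''⟫ / ‖σ''‖²) • σ''. Then ⟪σ − σ̂'', σ − σ*⟫ = 0, and consequently ‖σ − (1/2) • (σ* + σ̂'')‖ = (1/2)‖σ* − σ̂''‖; i.e. σ lies on the hypercircle for which the segment connecting σ* to σ̂'' is a diameter. -/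
open RealInnerProductSpace

theorem mem_sphere_ofDiameter_iff_inner_vsub_eq_zero {V P : Type*} [NormedAddCommGroup V]
    [InnerProductSpace ℝ V] [MetricSpace P] [NormedAddTorsor V P] {p a b : P} :
    p ∈ EuclideanGeometry.Sphere.ofDiameter a b ↔ ⟪a -ᵥ p, b -ᵥ p⟫ = 0 := by
  rw [← EuclideanGeometry.Sphere.angle_eq_pi_div_two_iff_mem_sphere_ofDiameter,
    EuclideanGeometry.angle, InnerProductGeometry.inner_eq_zero_iff_angle_eq_pi_div_two]

theorem mem_sphere_ofDiameter_iff_norm_sub_eq {V : Type*} [NormedAddCommGroup V]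
    [NormedSpace ℝ V] {x a b : V} :
    x ∈ EuclideanGeometry.Sphere.ofDiameter a b ↔
      ‖x - (1 / 2 : ℝ) • (a + b)‖ = (1 / 2) * ‖a - b‖ := by
  rw [EuclideanGeometry.mem_sphere, EuclideanGeometry.Sphere.ofDiameter, midpoint_eq_smul_add,
    invOf_eq_inv, dist_eq_norm, dist_eq_norm, div_eq_inv_mul, one_div]

theorem hypercircle_diameter_general {E : Type*} [NormedAddCommGroup E] [InnerProductSpace ℝ E]
    {K : Submodule ℝ E} {σ σstar τ : E} (hσ : ⟪σ, σ - σstar⟫ = 0) (hK : σ - σstar ∈ Kᗮ)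
    (hτ : τ ∈ K) :
    ⟪σ - τ, σ - σstar⟫ = 0 ∧ ‖σ - (1 / 2 : ℝ) • (σstar + τ)‖ = (1 / 2) * ‖σstar - τ‖ := by
  have right_angle : ⟪σ - τ, σ - σstar⟫ = 0 := by
    rw [inner_sub_left, hσ, Submodule.inner_right_of_mem_orthogonal hτ hK, sub_zero]
  have mem_hypercircle : σ ∈ EuclideanGeometry.Sphere.ofDiameter σstar τ := by
    rw [mem_sphere_ofDiameter_iff_inner_vsub_eq_zero, vsub_eq_sub, vsub_eq_sub,
      ← inner_neg_neg, neg_sub, neg_sub, real_inner_comm, right_angle]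
  exact ⟨right_angle, mem_sphere_ofDiameter_iff_norm_sub_eq.1 mem_hypercircle⟩

/-- Hypercircle diameter property: `⟪σ - σ̂'', σ - σ*⟫ = 0`, hence `σ` lies on the
hypercircle for which the segment connecting `σ*` to `σ̂''` is a diameter. -/
theorem hypercircle_diameter {E : Type*} [NormedAddCommGroup E] [InnerProductSpace ℝ E]
    (σ σstar σ'' : E) (hσ'' : σ'' ≠ 0)
    (h1 : ⟪σ, σ - σstar⟫ = 0) (h2 : ⟪σ - σstar, σ''⟫ = 0)
    (σhat : E) (hσhat : σhat = (⟪σ, σ''⟫ / ‖σ''‖ ^ 2) • σ'') :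
    ⟪σ - σhat, σ - σstar⟫ = 0 ∧
      ‖σ - (1 / 2 : ℝ) • (σstar + σhat)‖ = (1 / 2) * ‖σstar - σhat‖ :=
  hypercircle_diameter_general h1 (Submodule.mem_orthogonal_singleton_iff_inner_left.2 h2)
    (hσhat ▸ Submodule.smul_mem _ _ (Submodule.mem_span_singleton_self σ''))
end
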